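/- arXiv:1102.1451 — 2 statements merged into one kernel-verified Lean document; each statement's English description precedes it below -/
import Mathlib

section
/- Let S be an ordered semigroup with real multiplication satisfying axioms O1–O6, and let λ₁, λ₂ be functionals on S. Define λ : S → [0,∞] by λ(f) = inf{ λ₁(f₁) + λ₂(f₂) : f₁, f₂ ∈ S, f ≤ f₁ + f₂ }. Then the map f ↦ sup_{f' ≪ f} λ(f') is a functional on S that is the greatest lower bound of λ₁ and λ₂ in F(S). -/
open scoped ENNReal

/-- `CC s t` : `s` is (sequentially) compactly contained in `t`, written `s ≪ t`. -/
def CC {S : Type*} [AddCommMonoid S] [PartialOrder S] (s t : S) : Prop :=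
  ∀ u : ℕ → S, Monotone u → ∀ x : S, IsLUB (Set.range u) x → t ≤ x → ∃ n, s ≤ u n

/-- An ordered semigroup (positive, with translation invariant order) satisfying axioms O1-O5. -/
structure CuO5 (S : Type*) [AddCommMonoid S] [PartialOrder S] : Prop where
  addRightMono : ∀ {s t : S}, s ≤ t → ∀ r : S, s + r ≤ t + r
  zeroLe : ∀ s : S, 0 ≤ s
  O1 : ∀ u : ℕ → S, Monotone u → ∃ x : S, IsLUB (Set.range u) x
  O2 : ∀ s : S, ∃ u : ℕ → S, (∀ n, CC (u n) (u (n + 1))) ∧ IsLUB (Set.range u) s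
  O3 : ∀ {s₁ t₁ s₂ t₂ : S}, CC s₁ t₁ → CC s₂ t₂ → CC (s₁ + s₂) (t₁ + t₂)
  O4 : ∀ u v : ℕ → S, Monotone u → Monotone v → ∀ x y : S,
    IsLUB (Set.range u) x → IsLUB (Set.range v) y →
    IsLUB (Set.range fun n => u n + v n) (x + y)
  O5 : ∀ {s' s t : S}, CC s' s → s ≤ t → ∃ r : S, s' + r ≤ t ∧ t ≤ s + r

/-- Axioms O1-O6. -/
structure CuO6 (S : Type*) [AddCommMonoid S] [PartialOrder S] extends CuO5 S : Prop where
  O6 : ∀ {s r t : S}, s ≤ r + t → ∀ {s' : S}, CC s' s →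
    ∃ r' t' : S, s' ≤ r' + t' ∧ r' ≤ r ∧ r' ≤ s ∧ t' ≤ t ∧ t' ≤ s

/-- A functional on `S`: additive, order preserving, zero preserving map to `[0,∞]`
preserving suprema of increasing sequences. -/
structure IsFunctional {S : Type*} [AddCommMonoid S] [PartialOrder S] (l : S → ℝ≥0∞) : Prop where
  map_zero : l 0 = 0
  map_add : ∀ s t : S, l (s + t) = l s + l t
  mono : ∀ {s t : S}, s ≤ t → l s ≤ l t
  map_sup : ∀ u : ℕ → S, Monotone u → ∀ x : S, IsLUB (Set.range u) x → l x = ⨆ n, l (u n)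

/-- Real multiplication on `S` : a map `(0,∞] × S → S` additive, order preserving and
sup-(of increasing sequences)-preserving in each variable, with `1 · s = s`.
Scalars are elements of `ℝ≥0∞` required to be positive. -/
structure RealMul (S : Type*) [AddCommMonoid S] [PartialOrder S] where
  smul : ℝ≥0∞ → S → S
  add_left : ∀ {a b : ℝ≥0∞}, 0 < a → 0 < b → ∀ s : S, smul (a + b) s = smul a s + smul b s
  add_right : ∀ {a : ℝ≥0∞}, 0 < a → ∀ s t : S, smul a (s + t) = smul a s + smul a t
  mono_left : ∀ {a b : ℝ≥0∞}, 0 < a → a ≤ b → ∀ s : S, smul a s ≤ smul b s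
  mono_right : ∀ {a : ℝ≥0∞}, 0 < a → ∀ {s t : S}, s ≤ t → smul a s ≤ smul a t
  sup_left : ∀ u : ℕ → ℝ≥0∞, Monotone u → 0 < u 0 → ∀ s : S,
    IsLUB (Set.range fun n => smul (u n) s) (smul (⨆ n, u n) s)
  sup_right : ∀ {a : ℝ≥0∞}, 0 < a → ∀ u : ℕ → S, Monotone u → ∀ x : S,
    IsLUB (Set.range u) x → IsLUB (Set.range fun n => smul a (u n)) (smul a x)
  one_smul : ∀ s : S, smul 1 s = s

/-- `D` is a dense subset of `S`: every element of `S` is the supremum of a rapidly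
increasing sequence of elements of `D`. -/
def IsDenseSub {S : Type*} [AddCommMonoid S] [PartialOrder S] (D : Set S) : Prop :=
  ∀ s : S, ∃ u : ℕ → S, (∀ n, u n ∈ D) ∧ (∀ n, CC (u n) (u (n + 1))) ∧ IsLUB (Set.range u) s

/-- `m` is the least upper bound of the functionals `l₁` and `l₂` in `F(S)`
(pointwise order). -/
def IsFSup {S : Type*} [AddCommMonoid S] [PartialOrder S] (l₁ l₂ m : S → ℝ≥0∞) : Prop :=
  IsFunctional m ∧ (∀ s, l₁ s ≤ m s) ∧ (∀ s, l₂ s ≤ m s) ∧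
    ∀ d : S → ℝ≥0∞, IsFunctional d → (∀ s, l₁ s ≤ d s) → (∀ s, l₂ s ≤ d s) → ∀ s, m s ≤ d s

/-- `m` is the greatest lower bound of the functionals `l₁` and `l₂` in `F(S)`
(pointwise order). -/
def IsFInf {S : Type*} [AddCommMonoid S] [PartialOrder S] (l₁ l₂ m : S → ℝ≥0∞) : Prop :=
  IsFunctional m ∧ (∀ s, m s ≤ l₁ s) ∧ (∀ s, m s ≤ l₂ s) ∧
    ∀ d : S → ℝ≥0∞, IsFunctional d → (∀ s, d s ≤ l₁ s) → (∀ s, d s ≤ l₂ s) → ∀ s, d s ≤ m s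

/-- An isomorphism of ordered semigroups between `S` and the extended natural numbers. -/
def IsOrdSemigroupIso {S : Type*} [AddCommMonoid S] [PartialOrder S] (e : S ≃ ℕ∞) : Prop :=
  (∀ a b : S, e (a + b) = e a + e b) ∧ e 0 = 0 ∧ ∀ a b : S, a ≤ b ↔ e a ≤ e b

section Order

variable {S : Type*} [AddCommMonoid S] [PartialOrder S]

theorem CC.le {s t : S} (h : CC s t) : s ≤ t := by
  obtain ⟨_, hn⟩ := h (fun _ => t) monotone_const t (by simp) le_rfl
  exact hn

theorem CC.mono {s s' t t' : S} (h : CC s t) (hs : s' ≤ s) (ht : t ≤ t') : CC s' t' := by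
  intro u hu x hx htx
  obtain ⟨n, hn⟩ := h u hu x hx (ht.trans htx)
  exact ⟨n, hs.trans hn⟩

theorem CuO5.isOrderedAddMonoid (hS : CuO5 S) : IsOrderedAddMonoid S where
  add_le_add_left _ _ h c := hS.addRightMono h c

theorem CuO5.cc_zero (hS : CuO5 S) (s : S) : CC 0 s := fun u _ _ _ _ => ⟨0, hS.zeroLe (u 0)⟩

theorem CuO5.exists_rapid (hS : CuO5 S) (s : S) :
    ∃ u : ℕ → S, Monotone u ∧ (∀ n, CC (u n) (u (n + 1))) ∧ (∀ n, CC (u n) s) ∧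
      IsLUB (Set.range u) s := by
  obtain ⟨u, hu, hs⟩ := hS.O2 s
  exact ⟨u, monotone_nat_of_le_succ fun n => (hu n).le, hu,
    fun n => (hu n).mono le_rfl (hs.1 ⟨n + 1, rfl⟩), hs⟩

theorem CuO5.exists_between (hS : CuO5 S) {s t : S} (h : CC s t) : ∃ r, CC s r ∧ CC r t := by
  obtain ⟨u, hm, hu, ht, hs⟩ := hS.exists_rapid t
  obtain ⟨n, hn⟩ := h u hm t hs le_rfl
  exact ⟨u (n + 1), (hu n).mono hn le_rfl, ht _⟩

theorem IsFunctional.map_nsmul {l : S → ℝ≥0∞} (h : IsFunctional l) (n : ℕ) (s : S) :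
    l (n • s) = n * l s := by
  induction n with
  | zero => simp [h.map_zero]
  | succ n ih => rw [succ_nsmul, h.map_add, ih]; push_cast; ring

theorem IsFunctional.tendsto {l : S → ℝ≥0∞} (h : IsFunctional l) {u : ℕ → S} (hu : Monotone u)
    {x : S} (hx : IsLUB (Set.range u) x) :
    Filter.Tendsto (fun n => l (u n)) Filter.atTop (nhds (l x)) := by
  rw [h.map_sup u hu x hx]
  exact tendsto_atTop_iSup fun _ _ hij => h.mono (hu hij)

end Order

namespace RealMul

variable {S : Type*} [AddCommMonoid S] [PartialOrder S]

/-- Division by the positive integer `n + 1`. -/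
noncomputable def divSucc (rm : RealMul S) (n : ℕ) (s : S) : S := rm.smul ((n + 1 : ℕ) : ℝ≥0∞)⁻¹ s

theorem smul_nsmul (rm : RealMul S) {a : ℝ≥0∞} (ha : 0 < a) (n : ℕ) (s : S) :
    rm.smul a ((n + 1) • s) = (n + 1) • rm.smul a s := by
  induction n with
  | zero => simp
  | succ n ih => rw [succ_nsmul, rm.add_right ha, ih, succ_nsmul _ (n + 1)]

theorem mul_smul (rm : RealMul S) {a : ℝ≥0∞} (ha : 0 < a) (n : ℕ) (s : S) :
    rm.smul ((n + 1 : ℕ) * a) s = (n + 1) • rm.smul a s := by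
  induction n with
  | zero => simp
  | succ n ih =>
    rw [succ_nsmul, ← ih, ← rm.add_left (by simp [ha]) ha]
    push_cast
    ring_nf

theorem inv_pos (n : ℕ) : 0 < ((n + 1 : ℕ) : ℝ≥0∞)⁻¹ :=
  ENNReal.inv_pos.2 (ENNReal.natCast_ne_top _)

theorem nsmul_divSucc (rm : RealMul S) (n : ℕ) (s : S) : (n + 1) • rm.divSucc n s = s := by
  rw [divSucc, ← rm.mul_smul (inv_pos n),
    ENNReal.mul_inv_cancel (by simp) (ENNReal.natCast_ne_top _), rm.one_smul]

theorem divSucc_nsmul (rm : RealMul S) (n : ℕ) (s : S) : rm.divSucc n ((n + 1) • s) = s := by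
  rw [divSucc, rm.smul_nsmul (inv_pos n)]
  exact rm.nsmul_divSucc n s

theorem divSucc_mono (rm : RealMul S) (n : ℕ) : Monotone (rm.divSucc n) :=
  fun _ _ h => rm.mono_right (inv_pos n) h

theorem divSucc_add (rm : RealMul S) (n : ℕ) (s t : S) :
    rm.divSucc n (s + t) = rm.divSucc n s + rm.divSucc n t :=
  rm.add_right (inv_pos n) s t

theorem divSucc_one_add_self (rm : RealMul S) (s : S) : rm.divSucc 1 s + rm.divSucc 1 s = s := by
  rw [← two_nsmul, rm.nsmul_divSucc 1]

theorem mul_map_divSucc (rm : RealMul S) {l : S → ℝ≥0∞} (h : IsFunctional l) (n : ℕ) (s : S) :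
    (n + 1 : ℕ) * l (rm.divSucc n s) = l s := by
  rw [← h.map_nsmul, rm.nsmul_divSucc]

end RealMul

section Kantorovich

variable {S : Type*} [AddCommMonoid S] [PartialOrder S]

/-- The infimal convolution `f ↦ inf {l₁ f₁ + l₂ f₂ | f ≤ f₁ + f₂}`. -/
noncomputable def kantorovich (l₁ l₂ : S → ℝ≥0∞) (f : S) : ℝ≥0∞ :=
  sInf {x | ∃ f₁ f₂ : S, f ≤ f₁ + f₂ ∧ x = l₁ f₁ + l₂ f₂}

variable {l₁ l₂ : S → ℝ≥0∞}

theorem kantorovich_le {f f₁ f₂ : S} (h : f ≤ f₁ + f₂) :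
    kantorovich l₁ l₂ f ≤ l₁ f₁ + l₂ f₂ :=
  sInf_le ⟨f₁, f₂, h, rfl⟩

theorem le_kantorovich {f : S} {c : ℝ≥0∞} (h : ∀ f₁ f₂, f ≤ f₁ + f₂ → c ≤ l₁ f₁ + l₂ f₂) :
    c ≤ kantorovich l₁ l₂ f := by
  refine le_sInf ?_
  rintro _ ⟨f₁, f₂, hf, rfl⟩
  exact h f₁ f₂ hf

theorem kantorovich_mono : Monotone (kantorovich l₁ l₂) :=
  fun _ _ h => le_kantorovich fun _ _ hf => kantorovich_le (h.trans hf)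

theorem kantorovich_add_le (hS : CuO5 S) (h₁ : IsFunctional l₁) (h₂ : IsFunctional l₂) (f g : S) :
    kantorovich l₁ l₂ (f + g) ≤ kantorovich l₁ l₂ f + kantorovich l₁ l₂ g := by
  have := hS.isOrderedAddMonoid
  conv_rhs => rw [kantorovich, ENNReal.sInf_add]
  refine le_iInf₂ ?_
  rintro _ ⟨f₁, f₂, hf, rfl⟩
  conv_rhs => rw [add_comm, kantorovich, ENNReal.sInf_add]
  refine le_iInf₂ ?_
  rintro _ ⟨g₁, g₂, hg, rfl⟩
  refine (kantorovich_le (f₁ := f₁ + g₁) (f₂ := f₂ + g₂) ?_).trans_eq ?_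
  · rw [add_add_add_comm]
    exact add_le_add hf hg
  · rw [h₁.map_add, h₂.map_add]
    ring

theorem kantorovich_le_two_mul_divSucc (hS : CuO5 S) (rm : RealMul S) (h₁ : IsFunctional l₁)
    (h₂ : IsFunctional l₂) (f : S) :
    kantorovich l₁ l₂ f ≤ 2 * kantorovich l₁ l₂ (rm.divSucc 1 f) := by
  have h := kantorovich_add_le hS h₁ h₂ (rm.divSucc 1 f) (rm.divSucc 1 f)
  rwa [rm.divSucc_one_add_self, ← two_mul] at h

/-- A summand absorbed by the right-hand side can be cancelled in the estimate of `kantorovich`. -/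
theorem kantorovich_le_of_add_le_add (hS : CuO5 S) (rm : RealMul S) (h₁ : IsFunctional l₁)
    (h₂ : IsFunctional l₂) {f z a b : S} (h : z + f ≤ z + (a + b)) (hz : z ≤ a + b) :
    kantorovich l₁ l₂ f ≤ l₁ a + l₂ b := by
  have := hS.isOrderedAddMonoid
  have iter (n : ℕ) : z + n • f ≤ z + n • (a + b) := by
    induction n with
    | zero => simp
    | succ n ih =>
      calc z + (n + 1) • f = (z + n • f) + f := by rw [succ_nsmul, add_assoc]
        _ ≤ (z + n • (a + b)) + f := by gcongr
        _ = (z + f) + n • (a + b) := by abel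
        _ ≤ (z + (a + b)) + n • (a + b) := by gcongr
        _ = z + (n + 1) • (a + b) := by rw [succ_nsmul]; abel
  have bound (n : ℕ) :
      kantorovich l₁ l₂ f ≤ (1 + ((n + 1 : ℕ) : ℝ≥0∞)⁻¹) * (l₁ a + l₂ b) := by
    have hle : (n + 1) • f ≤ (n + 1 + 1) • a + (n + 1 + 1) • b := by
      calc (n + 1) • f ≤ z + (n + 1) • f := le_add_of_nonneg_left (hS.zeroLe z)
        _ ≤ z + (n + 1) • (a + b) := iter _
        _ ≤ (a + b) + (n + 1) • (a + b) := by gcongr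
        _ = _ := by rw [← nsmul_add, succ_nsmul _ (n + 1), add_comm]
    have hle' := rm.divSucc_mono n hle
    rw [rm.divSucc_nsmul, rm.divSucc_add] at hle'
    refine (kantorovich_le hle').trans_eq ?_
    have hdiv {l : S → ℝ≥0∞} (hl : IsFunctional l) (s : S) :
        l (rm.divSucc n ((n + 1 + 1) • s)) = (1 + ((n + 1 : ℕ) : ℝ≥0∞)⁻¹) * l s := by
      rw [succ_nsmul, rm.divSucc_add, rm.divSucc_nsmul, hl.map_add, add_mul, one_mul,
        ← rm.mul_map_divSucc hl n s, ← mul_assoc, ENNReal.inv_mul_cancel (by simp)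
        (ENNReal.natCast_ne_top _), one_mul]
    rw [hdiv h₁, hdiv h₂, mul_add]
  have hlim : Filter.Tendsto (fun n : ℕ => (1 + ((n + 1 : ℕ) : ℝ≥0∞)⁻¹) * (l₁ a + l₂ b))
      Filter.atTop (nhds ((1 + 0) * (l₁ a + l₂ b))) :=
    ENNReal.Tendsto.mul_const
      (tendsto_const_nhds.add
        ((Filter.tendsto_add_atTop_iff_nat 1).2 ENNReal.tendsto_inv_nat_nhds_zero))
      (Or.inl (by simp))
  simpa using ge_of_tendsto' hlim bound

/-- Improving a bound on the failure of superadditivity: if `A + G ≤ H + x * A` can be applied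
to a remainder `R` of `A`, then the defect is halved. -/
theorem defect_halving {A G H L R p : ℝ≥0∞} {x : NNReal} (hx : x ≤ 1) (hH : H ≠ ∞)
    (hR : R ≠ ∞) (hA : A ≤ p + R) (hA2 : A ≤ 2 * p) (hp : p + L ≤ H)
    (hRG : R + G ≤ L + x * R) : A + G ≤ H + (x / 2 : NNReal) * A := by
  have hpt : p ≠ ∞ := ne_top_of_le_ne_top hH (le_self_add.trans hp)
  have hLt : L ≠ ∞ := ne_top_of_le_ne_top hH (le_add_self.trans hp)
  have hAt : A ≠ ∞ := ne_top_of_le_ne_top (by finiteness) hA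
  have hGt : G ≠ ∞ := ne_top_of_le_ne_top (by finiteness) (le_add_self.trans hRG)
  lift A to NNReal using hAt
  lift G to NNReal using hGt
  lift H to NNReal using hH
  lift L to NNReal using hLt
  lift R to NNReal using hR
  lift p to NNReal using hpt
  norm_cast at *
  rw [← NNReal.coe_le_coe] at *
  push_cast at *
  nlinarith [mul_nonneg (sub_nonneg.2 hx) (sub_nonneg.2 hA), mul_nonneg x.2 (sub_nonneg.2 hA2)]

theorem kantorovich_defect (hS : CuO6 S) (rm : RealMul S) (h₁ : IsFunctional l₁)
    (h₂ : IsFunctional l₂) (k : ℕ) {f f' : S} (g : S) (hf : CC f' f) :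
    kantorovich l₁ l₂ f' + kantorovich l₁ l₂ g ≤
      kantorovich l₁ l₂ (f + g) + ((1 / 2) ^ k : NNReal) * kantorovich l₁ l₂ f' := by
  have := hS.toCuO5.isOrderedAddMonoid
  induction k generalizing f f' g with
  | zero =>
    rw [add_comm]
    have : kantorovich l₁ l₂ g ≤ kantorovich l₁ l₂ (f + g) :=
      kantorovich_mono (le_add_of_nonneg_left (hS.zeroLe f))
    simpa using add_le_add_left this _
  | succ k ih =>
    rw [← tsub_le_iff_right]
    refine le_kantorovich fun u v huv => ?_
    rw [tsub_le_iff_right]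
    by_cases htop : l₁ u + l₂ v = ∞
    · simp [htop]
    refine ENNReal.le_of_forall_pos_le_add fun ε hε _ => ?_
    have hfuv : f ≤ u + v := (le_add_of_nonneg_right (hS.zeroLe g)).trans huv
    obtain ⟨f₁, f₂, hf', hf₁u, hf₁, hf₂v, hf₂⟩ := hS.O6 hfuv hf
    set x := rm.divSucc 1 f₁
    set y := rm.divSucc 1 f₂
    have hxu : x ≤ rm.divSucc 1 u := rm.divSucc_mono 1 hf₁u
    have hyv : y ≤ rm.divSucc 1 v := rm.divSucc_mono 1 hf₂v
    have hxyf : x + y ≤ f := by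
      rw [← rm.divSucc_one_add_self f]
      exact add_le_add (rm.divSucc_mono 1 hf₁) (rm.divSucc_mono 1 hf₂)
    have hf'xy : rm.divSucc 1 f' ≤ x + y := by
      rw [← rm.divSucc_add]
      exact rm.divSucc_mono 1 hf'
    obtain ⟨X, hXm, hX, hXx, hXs⟩ := hS.exists_rapid x
    obtain ⟨Y, hYm, hY, hYy, hYs⟩ := hS.exists_rapid y
    have hlx : l₁ x ≠ ∞ := ne_top_of_le_ne_top htop ((h₁.mono
      (hxu.trans ((le_add_of_nonneg_left (hS.zeroLe _)).trans_eq
        (rm.divSucc_one_add_self u)))).trans le_self_add)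
    have hly : l₂ y ≠ ∞ := ne_top_of_le_ne_top htop ((h₂.mono
      (hyv.trans ((le_add_of_nonneg_left (hS.zeroLe _)).trans_eq
        (rm.divSucc_one_add_self v)))).trans le_add_self)
    obtain ⟨n, hn⟩ : ∃ n, l₁ x + l₂ y ≤ l₁ (X n) + l₂ (Y n) + ε := by
      have hlim := ((h₁.tendsto hXm hXs).add (h₂.tendsto hYm hYs)).add_const (ε : ℝ≥0∞)
      have hlt : l₁ x + l₂ y < l₁ x + l₂ y + ε :=
        ENNReal.lt_add_right (by finiteness) (by simpa using hε.ne')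
      exact ((hlim.eventually_const_lt hlt).exists).imp fun _ => le_of_lt
    obtain ⟨a₀, ha, ha'⟩ := hS.O5 (hX n) ((hXx (n + 1)).le.trans hxu)
    obtain ⟨b₀, hb, hb'⟩ := hS.O5 (hY n) ((hYy (n + 1)).le.trans hyv)
    obtain ⟨r, hr, hr'⟩ := hS.O5 (hS.O3 (hXx (n + 1)) (hYy (n + 1))) hxyf
    set a := a₀ + rm.divSucc 1 u
    set b := b₀ + rm.divSucc 1 v
    have hXa : X n + a ≤ u := by
      rw [← rm.divSucc_one_add_self u, ← add_assoc]
      exact add_le_add_left ha _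
    have hYb : Y n + b ≤ v := by
      rw [← rm.divSucc_one_add_self v, ← add_assoc]
      exact add_le_add_left hb _
    have huX : u ≤ X (n + 1) + a := by
      conv_lhs => rw [← rm.divSucc_one_add_self u]
      rw [← add_assoc]
      exact add_le_add_left ha' _
    have hvY : v ≤ Y (n + 1) + b := by
      conv_lhs => rw [← rm.divSucc_one_add_self v]
      rw [← add_assoc]
      exact add_le_add_left hb' _
    have hL : kantorovich l₁ l₂ (r + g) ≤ l₁ a + l₂ b := by
      refine kantorovich_le_of_add_le_add hS.toCuO5 rm h₁ h₂ (z := X (n + 1) + Y (n + 1)) ?_ ?_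
      · calc X (n + 1) + Y (n + 1) + (r + g) = (X (n + 1) + Y (n + 1) + r) + g := by abel
          _ ≤ f + g := by gcongr
          _ ≤ u + v := huv
          _ ≤ (X (n + 1) + a) + (Y (n + 1) + b) := add_le_add huX hvY
          _ = _ := by abel
      · exact add_le_add
          (((hXx _).le.trans hxu).trans (le_add_of_nonneg_left (hS.zeroLe a₀)))
          (((hYy _).le.trans hyv).trans (le_add_of_nonneg_left (hS.zeroLe b₀)))
    obtain ⟨r', hr'r, hfr'⟩ : ∃ r', CC r' r ∧ f' ≤ x + y + r' := by
      obtain ⟨ρ, hρm, -, hρr, hρs⟩ := hS.exists_rapid r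
      obtain ⟨m, hm⟩ := hf (fun m => x + y + ρ m) (fun i j hij => add_le_add_right (hρm hij) _) _
        (hS.O4 (fun _ => x + y) ρ monotone_const hρm (x + y) r (by simp) hρs) hr'
      exact ⟨ρ m, hρr m, hm⟩
    have hp : l₁ x + l₂ y + kantorovich l₁ l₂ (r + g) ≤ l₁ u + l₂ v + ε := by
      calc l₁ x + l₂ y + kantorovich l₁ l₂ (r + g)
          ≤ (l₁ (X n) + l₂ (Y n) + ε) + (l₁ a + l₂ b) := add_le_add hn hL
        _ = l₁ (X n + a) + l₂ (Y n + b) + ε := by rw [h₁.map_add (X n) a, h₂.map_add (Y n) b]; ring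
        _ ≤ _ := by gcongr; exacts [h₁.mono hXa, h₂.mono hYb]
    have hxy : kantorovich l₁ l₂ (x + y) ≤ l₁ x + l₂ y := kantorovich_le le_rfl
    have key := defect_halving (x := (1 / 2) ^ k) (A := kantorovich l₁ l₂ f')
      (pow_le_one₀ (by positivity) (by norm_num)) (by finiteness)
      (ne_top_of_le_ne_top (by finiteness) ((kantorovich_mono
        (hr'r.le.trans (le_add_of_nonneg_right (hS.zeroLe g)))).trans (le_add_self.trans hp)))
      ((kantorovich_mono hfr').trans ((kantorovich_add_le hS.toCuO5 h₁ h₂ _ _).trans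
        (add_le_add_left hxy _)))
      ((kantorovich_le_two_mul_divSucc hS.toCuO5 rm h₁ h₂ f').trans
        (by gcongr; exact (kantorovich_mono hf'xy).trans hxy))
      hp (ih g hr'r)
    rw [pow_succ, mul_one_div, add_right_comm]
    exact key

theorem kantorovich_add_le_of_cc (hS : CuO6 S) (rm : RealMul S) (h₁ : IsFunctional l₁)
    (h₂ : IsFunctional l₂) {f f' : S} (g : S) (hf : CC f' f) :
    kantorovich l₁ l₂ f' + kantorovich l₁ l₂ g ≤ kantorovich l₁ l₂ (f + g) := by
  have := hS.toCuO5.isOrderedAddMonoid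
  by_cases htop : kantorovich l₁ l₂ (f + g) = ∞
  · simp [htop]
  have hfin : kantorovich l₁ l₂ f' ≠ ∞ := ne_top_of_le_ne_top htop
    (kantorovich_mono (hf.le.trans (le_add_of_nonneg_right (hS.zeroLe g))))
  have hpow : Filter.Tendsto (fun k : ℕ => (((1 / 2) ^ k : NNReal) : ℝ≥0∞))
      Filter.atTop (nhds ((0 : NNReal) : ℝ≥0∞)) :=
    ENNReal.tendsto_coe.2 (NNReal.tendsto_pow_atTop_nhds_zero_of_lt_one (by norm_num))
  have hlim := (ENNReal.Tendsto.mul_const hpow (Or.inr hfin)).const_add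
    (kantorovich l₁ l₂ (f + g))
  simpa using ge_of_tendsto' hlim fun k => kantorovich_defect hS rm h₁ h₂ k g hf

/-- The lower regularization `f ↦ sup {l f' | f' ≪ f}`. -/
noncomputable def lowerReg (l : S → ℝ≥0∞) (f : S) : ℝ≥0∞ := sSup (l '' {f' | CC f' f})

theorem le_lowerReg {l : S → ℝ≥0∞} {f f' : S} (h : CC f' f) : l f' ≤ lowerReg l f :=
  le_sSup ⟨f', h, rfl⟩

theorem lowerReg_le {l : S → ℝ≥0∞} {f : S} {c : ℝ≥0∞} (h : ∀ f', CC f' f → l f' ≤ c) :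
    lowerReg l f ≤ c := by
  refine sSup_le ?_
  rintro _ ⟨f', hf', rfl⟩
  exact h f' hf'

/-- The lower regularization of a monotone subadditive map that is superadditive up to `≪`
is a functional. -/
theorem isFunctional_lowerReg (hS : CuO5 S) {l : S → ℝ≥0∞} (hzero : l 0 = 0) (hmono : Monotone l)
    (hsub : ∀ f g, l (f + g) ≤ l f + l g)
    (hsuper : ∀ f f' g, CC f' f → l f' + l g ≤ l (f + g)) :
    IsFunctional (lowerReg l) where
  map_zero := le_antisymm (lowerReg_le fun _ h => (hmono h.le).trans_eq hzero) zero_le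
  mono h := lowerReg_le fun _ hs => le_lowerReg (hs.mono le_rfl h)
  map_add s t := by
    refine le_antisymm (lowerReg_le fun h hh => ?_) ?_
    · obtain ⟨u, hum, -, hus, hu⟩ := hS.exists_rapid s
      obtain ⟨v, hvm, -, hvt, hv⟩ := hS.exists_rapid t
      have := hS.isOrderedAddMonoid
      obtain ⟨n, hn⟩ := hh _ (hum.add hvm) _ (hS.O4 u v hum hvm s t hu hv) le_rfl
      exact (hmono hn).trans ((hsub _ _).trans
        (add_le_add (le_lowerReg (hus n)) (le_lowerReg (hvt n))))
    · rw [lowerReg, lowerReg, sSup_image, sSup_image]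
      refine ENNReal.biSup_add_biSup_le ⟨0, hS.cc_zero s⟩ ⟨0, hS.cc_zero t⟩ fun s' hs t' ht => ?_
      obtain ⟨r, hsr, hrs⟩ := hS.exists_between hs
      exact (hsuper r s' t' hsr).trans (le_lowerReg (hS.O3 hrs ht))
  map_sup u hu x hx := by
    refine le_antisymm (lowerReg_le fun s hs => ?_) (iSup_le fun n => lowerReg_le fun s hs =>
      le_lowerReg (hs.mono le_rfl (hx.1 ⟨n, rfl⟩)))
    obtain ⟨r, hsr, hrx⟩ := hS.exists_between hs
    obtain ⟨n, hn⟩ := hrx u hu x hx le_rfl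
    exact (le_lowerReg (hsr.mono le_rfl hn)).trans (le_iSup (fun n => lowerReg l (u n)) n)

end Kantorovich

/-- the Kantorovich-type formula for the infimum of two functionals. -/
theorem inf_kantorovich {S : Type*} [AddCommMonoid S] [PartialOrder S]
    (hS : CuO6 S) (rm : RealMul S) (l₁ l₂ : S → ℝ≥0∞)
    (h₁ : IsFunctional l₁) (h₂ : IsFunctional l₂) :
    ∀ lam : S → ℝ≥0∞,
      (lam = fun f => sInf {x | ∃ f₁ f₂ : S, f ≤ f₁ + f₂ ∧ x = l₁ f₁ + l₂ f₂}) →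
      IsFInf l₁ l₂ (fun f => sSup (lam '' {f' | CC f' f})) := by
  rintro _ rfl
  change IsFInf l₁ l₂ (lowerReg (kantorovich l₁ l₂))
  have hzero : kantorovich l₁ l₂ 0 = 0 := le_antisymm
    ((kantorovich_le (f₁ := 0) (f₂ := 0) (by simp)).trans_eq (by simp [h₁.map_zero, h₂.map_zero]))
    zero_le
  refine ⟨isFunctional_lowerReg hS.toCuO5 hzero kantorovich_mono
    (kantorovich_add_le hS.toCuO5 h₁ h₂)
    (fun f f' g hf => kantorovich_add_le_of_cc hS rm h₁ h₂ g hf),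
    fun s => lowerReg_le fun s' h => ?_, fun s => lowerReg_le fun s' h => ?_,
    fun d hd hd₁ hd₂ s => ?_⟩
  · simpa [h₂.map_zero] using kantorovich_le (l₁ := l₁) (l₂ := l₂) (f₁ := s) (f₂ := 0)
      (h.le.trans_eq (add_zero s).symm)
  · simpa [h₁.map_zero] using kantorovich_le (l₁ := l₁) (l₂ := l₂) (f₁ := 0) (f₂ := s)
      (h.le.trans_eq (zero_add s).symm)
  · obtain ⟨u, hum, -, hus, hu⟩ := hS.exists_rapid s
    rw [hd.map_sup u hum s hu]
    refine iSup_le fun n => le_trans (le_kantorovich fun f₁ f₂ hf => ?_) (le_lowerReg (hus n))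
    calc d (u n) ≤ d (f₁ + f₂) := hd.mono hf
      _ = d f₁ + d f₂ := hd.map_add _ _
      _ ≤ _ := add_le_add (hd₁ _) (hd₂ _)
end

section
/- Let S be an ordered semigroup with real multiplication satisfying axioms O1–O6, and let f, g ∈ S with f ∝ g. Then the set { h ∈ S : there exists h' ∈ S with h ≪ h', h' ≤ f, and h' ≤ g } is upward directed: for any two elements p, q of this set there is an element r of this set with p ≤ r and q ≤ r. -/
open scoped ENNReal

theorem CuO5.isOrderedAddMonoid_s12 {S : Type*} [AddCommMonoid S] [PartialOrder S] (hS : CuO5 S) :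
    IsOrderedAddMonoid S :=
  { add_le_add_left := fun _ _ h c => hS.addRightMono h c
    add_le_add_right := fun _ _ h c => by simpa only [add_comm c] using hS.addRightMono h c }

section CompactContainment

variable {S : Type*} [AddCommMonoid S] [PartialOrder S]

theorem CC.trans_le {s t t' : S} (h : CC s t) (ht : t ≤ t') : CC s t' :=
  fun u hu x hx hle => h u hu x hx (ht.trans hle)

theorem CC.of_le {s s' t : S} (hs : s' ≤ s) (h : CC s t) : CC s' t := fun u hu x hx hle =>
  (h u hu x hx hle).imp fun _ hn => hs.trans hn

theorem monotone_of_CC {u : ℕ → S} (hu : ∀ n, CC (u n) (u (n + 1))) : Monotone u :=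
  monotone_nat_of_le_succ fun n => (hu n).le

theorem CuO5.CC_zero (hS : CuO5 S) : CC (0 : S) 0 := fun _ _ _ _ _ => ⟨0, hS.zeroLe _⟩

theorem CuO5.CC_sum (hS : CuO5 S) {u v : ℕ → S} (h : ∀ i, CC (u i) (v i)) (N : ℕ) :
    CC (∑ i ∈ Finset.range N, u i) (∑ i ∈ Finset.range N, v i) := by
  induction N with
  | zero => simpa using hS.CC_zero
  | succ N ih => simpa only [Finset.sum_range_succ] using hS.O3 ih (h N)

theorem CuO5.CC_nsmul (hS : CuO5 S) {s t : S} (h : CC s t) (N : ℕ) : CC (N • s) (N • t) := by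
  simpa using hS.CC_sum (u := fun _ => s) (v := fun _ => t) (fun _ => h) N

/-- The elements compactly contained in `f` form a directed set. -/
theorem CuO5.exists_CC_ge (hS : CuO5 S) {s t f x y : S} (hs : CC s x) (ht : CC t y) (hx : x ≤ f)
    (hy : y ≤ f) : ∃ z, CC z f ∧ s ≤ z ∧ t ≤ z := by
  obtain ⟨u, hu, hf⟩ := hS.O2 f
  have hm := monotone_of_CC hu
  obtain ⟨i, hi⟩ := hs u hm f hf hx
  obtain ⟨j, hj⟩ := ht u hm f hf hy
  exact ⟨u (max i j), (hu _).trans_le (hf.1 ⟨_, rfl⟩), hi.trans (hm (le_max_left _ _)),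
    hj.trans (hm (le_max_right _ _))⟩

theorem CuO5.CC_interpolate (hS : CuO5 S) {s t : S} (h : CC s t) : ∃ x, CC s x ∧ CC x t := by
  obtain ⟨u, hu, ht⟩ := hS.O2 t
  obtain ⟨i, hi⟩ := h u (monotone_of_CC hu) t ht le_rfl
  exact ⟨u (i + 1), (hu i).of_le hi, (hu (i + 1)).trans_le (ht.1 ⟨_, rfl⟩)⟩

/-- Between `N • p` and `N • p'` there is a chain for `≪` whose gaps are controlled by `p'`,
independently of `N`. -/
theorem CuO5.exists_chain (hS : CuO5 S) {p p' : S} (h : CC p p') (N : ℕ) :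
    ∃ y₀ y₁ y₂ : S, CC y₀ y₁ ∧ CC y₁ y₂ ∧ N • p ≤ y₀ ∧ y₂ ≤ N • p' ∧ y₂ ≤ y₀ + 2 • p' := by
  have := hS.isOrderedAddMonoid_s12
  obtain ⟨u, hu, ht⟩ := hS.O2 p'
  have hm := monotone_of_CC hu
  obtain ⟨m, hi⟩ := h u hm p' ht le_rfl
  have hle : ∀ i, u i ≤ p' := fun i => ht.1 ⟨i, rfl⟩
  have step : ∀ k, ∑ i ∈ Finset.range N, u (k + 1 + i) ≤
      (∑ i ∈ Finset.range N, u (k + i)) + p' := by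
    intro k
    calc ∑ i ∈ Finset.range N, u (k + 1 + i)
        ≤ (∑ i ∈ Finset.range N, u (k + 1 + i)) + u k := le_add_of_nonneg_right (hS.zeroLe _)
      _ = (∑ i ∈ Finset.range N, u (k + i)) + u (k + N) := by
          rw [← Finset.sum_range_succ (fun i => u (k + i)),
            Finset.sum_range_succ' (fun i => u (k + i))]
          simp only [add_zero, add_assoc, add_comm 1]
      _ ≤ _ := by gcongr; exact hle _
  have hCC : ∀ k, CC (∑ i ∈ Finset.range N, u (k + i)) (∑ i ∈ Finset.range N, u (k + 1 + i)) :=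
    fun k => hS.CC_sum (fun i => by simpa only [add_right_comm k 1 i] using hu (k + i)) N
  refine ⟨_, _, _, hCC m, hCC (m + 1), ?_, ?_, ?_⟩
  · simpa using Finset.sum_le_sum (s := Finset.range N) (f := fun _ => p)
      fun i _ => hi.trans (hm (Nat.le_add_right m i))
  · simpa using Finset.sum_le_sum (s := Finset.range N) (g := fun _ => p') fun i _ => hle _
  · rw [two_nsmul, ← add_assoc]
    exact (step (m + 1)).trans (by gcongr; exact step m)

end CompactContainment

namespace RealMul

variable {S : Type*} [AddCommMonoid S] [PartialOrder S]

theorem succ_nsmul_smul (rm : RealMul S) {a : ℝ≥0∞} (ha : 0 < a) (k : ℕ) (x : S) :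
    (k + 1) • rm.smul a x = rm.smul (((k + 1 : ℕ) : ℝ≥0∞) * a) x := by
  induction k with
  | zero => simp
  | succ k ih =>
    rw [succ_nsmul, ih, ← rm.add_left (by positivity) ha]
    push_cast
    ring_nf

theorem smul_succ_nsmul (rm : RealMul S) {a : ℝ≥0∞} (ha : 0 < a) (k : ℕ) (x : S) :
    rm.smul a ((k + 1) • x) = (k + 1) • rm.smul a x := by
  induction k with
  | zero => simp
  | succ k ih => rw [succ_nsmul, rm.add_right ha, ih, ← succ_nsmul]

theorem succ_nsmul_smul_inv (rm : RealMul S) (k : ℕ) (x : S) :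
    (k + 1) • rm.smul ((k + 1 : ℕ) : ℝ≥0∞)⁻¹ x = x := by
  rw [rm.succ_nsmul_smul (ENNReal.inv_pos.2 (ENNReal.natCast_ne_top _)),
    ENNReal.mul_inv_cancel (by simp) (ENNReal.natCast_ne_top _), rm.one_smul]

theorem exists_succ_nsmul_eq (rm : RealMul S) (k : ℕ) (x : S) : ∃ y, (k + 1) • y = x :=
  ⟨_, rm.succ_nsmul_smul_inv k x⟩

theorem le_of_succ_nsmul_le (rm : RealMul S) {k : ℕ} {x y : S}
    (h : (k + 1) • x ≤ (k + 1) • y) : x ≤ y := by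
  have ha : 0 < ((k + 1 : ℕ) : ℝ≥0∞)⁻¹ := ENNReal.inv_pos.2 (ENNReal.natCast_ne_top _)
  simpa only [rm.smul_succ_nsmul ha, rm.succ_nsmul_smul_inv] using rm.mono_right ha h

/-- Every `x` is the supremum of its multiples by `(k + 1) / (k + K + 1)`. -/
theorem exists_ratio (rm : RealMul S) (K : ℕ) (x : S) :
    ∃ z : ℕ → S, Monotone z ∧ IsLUB (Set.range z) x ∧ ∀ k, (k + K + 1) • z k = (k + 1) • x := by
  let t : ℕ → ℝ≥0∞ := fun k => 1 - K * ((k + K + 1 : ℕ) : ℝ≥0∞)⁻¹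
  have ht : Monotone t := fun i j hij => by
    simp only [t]
    gcongr
  have hmul : ∀ k, ((k + K + 1 : ℕ) : ℝ≥0∞) * t k = (k + 1 : ℕ) := by
    intro k
    simp only [t]
    rw [ENNReal.mul_sub (fun _ _ => ENNReal.natCast_ne_top _), mul_left_comm,
      ENNReal.mul_inv_cancel (by simp) (ENNReal.natCast_ne_top _), mul_one, mul_one,
      ← ENNReal.natCast_sub]
    congr 1
    omega
  have hpos : ∀ k, 0 < t k := fun k => pos_iff_ne_zero.2 fun h => by
    have := hmul k
    rw [h, mul_zero] at this
    exact absurd this.symm (by simp)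
  have hsup : ⨆ k, t k = 1 := by
    refine iSup_eq_of_tendsto ht ?_
    have h0 : Filter.Tendsto (fun k : ℕ => ((k + K + 1 : ℕ) : ℝ≥0∞)⁻¹) Filter.atTop (nhds 0) :=
      ENNReal.tendsto_inv_nat_nhds_zero.comp (Filter.tendsto_add_atTop_nat (K + 1))
    have h1 := ENNReal.Tendsto.const_mul (a := (K : ℝ≥0∞)) h0
      (Or.inr (ENNReal.natCast_ne_top K))
    simpa [t] using ENNReal.Tendsto.sub tendsto_const_nhds h1 (Or.inl ENNReal.one_ne_top)
  refine ⟨fun k => rm.smul (t k) x, fun i j hij => rm.mono_left (hpos i) (ht hij) x, ?_, ?_⟩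
  · simpa only [hsup, rm.one_smul] using rm.sup_left t ht (hpos 0) x
  · intro k
    have h1 := rm.succ_nsmul_smul zero_lt_one k x
    rw [rm.succ_nsmul_smul (hpos k), hmul]
    rwa [rm.one_smul, mul_one, eq_comm] at h1

theorem le_of_forall_nsmul_le (rm : RealMul S) (K : ℕ) {x y : S}
    (h : ∀ k : ℕ, (k + 1) • x ≤ (k + K + 1) • y) : x ≤ y := by
  obtain ⟨z, -, hx, hz⟩ := rm.exists_ratio K x
  refine hx.2 ?_
  rintro _ ⟨k, rfl⟩
  exact rm.le_of_succ_nsmul_le ((hz k).trans_le (h k))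

/-- Cancellation of an element `h` that is dominated by a multiple of the right hand side. -/
theorem le_of_add_le_add_right (rm : RealMul S) (hS : CuO5 S) {x y h : S} (m : ℕ) (hm : h ≤ m • y)
    (hle : x + h ≤ y + h) : x ≤ y := by
  have := hS.isOrderedAddMonoid_s12
  have key : ∀ k : ℕ, k • x + h ≤ k • y + h := by
    intro k
    induction k with
    | zero => simp
    | succ k ih =>
      calc (k + 1) • x + h = k • x + (x + h) := by rw [succ_nsmul, add_assoc]
        _ ≤ k • x + (y + h) := by gcongr
        _ = (k • x + h) + y := by abel
        _ ≤ (k • y + h) + y := by gcongr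
        _ = (k + 1) • y + h := by rw [succ_nsmul]; abel
  refine rm.le_of_forall_nsmul_le m fun k => ?_
  calc (k + 1) • x ≤ (k + 1) • x + h := le_add_of_nonneg_right (hS.zeroLe _)
    _ ≤ (k + 1) • y + h := key _
    _ ≤ (k + 1) • y + m • y := by gcongr
    _ = (k + m + 1) • y := by rw [← add_nsmul, add_right_comm]

/-- Upper bounds of `p` and `q` below `f` and `g`, up to a factor `N / (N + 4 * n)`. -/
theorem exists_approx_upper_bound (rm : RealMul S) (hS : CuO6 S) {f g p p' q q' : S} {n : ℕ}
    (hfg : f ≤ (n + 1) • g) (hp : CC p p') (hq : CC q q') (hpf : p' ≤ f) (hpg : p' ≤ g)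
    (hqf : q' ≤ f) (hqg : q' ≤ g) (N : ℕ) :
    ∃ r, r ≤ f ∧ r ≤ g ∧ N • p ≤ (N + 4 * (n + 1)) • r ∧ N • q ≤ (N + 4 * (n + 1)) • r := by
  have hS' := hS.toCuO5
  have := hS'.isOrderedAddMonoid_s12
  have h0 : ∀ x : S, 0 ≤ x := hS'.zeroLe
  obtain ⟨w, hw⟩ := rm.exists_succ_nsmul_eq n f
  have hwf : w ≤ f := by
    rw [← hw, succ_nsmul]
    exact le_add_of_nonneg_left (h0 _)
  have hwg : w ≤ g := rm.le_of_succ_nsmul_le (hw.trans_le hfg)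
  obtain ⟨p₁, hp₁, hp₁'⟩ := hS'.CC_interpolate hp
  obtain ⟨q₁, hq₁, hq₁'⟩ := hS'.CC_interpolate hq
  obtain ⟨z, hzf, hpz, hqz⟩ := hS'.exists_CC_ge hp₁' hq₁' hpf hqf
  obtain ⟨y₀, y₁, y₂, hy₀₁, hy₁₂, hpy, hyp, hyy⟩ := hS'.exists_chain hp₁ N
  obtain ⟨F₀, F₁, F₂, hF₀₁, hF₁₂, hzF, hFf, hFF⟩ := hS'.exists_chain hzf N
  have hyF : y₂ ≤ F₀ := (hyp.trans (nsmul_le_nsmul_right hpz N)).trans hzF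
  have hpf₁ : p₁ ≤ f := hp₁'.le.trans hpf
  have hy₁N : ∀ {x}, p₁ ≤ x → y₁ ≤ N • x := fun hx =>
    (hy₁₂.le.trans hyp).trans (nsmul_le_nsmul_right hx N)
  obtain ⟨a, ha, ha'⟩ := hS'.O5 hy₁₂ (hyF.trans hF₀₁.le)
  obtain ⟨v, hv, hva⟩ := hS'.O2 a
  have hvm := monotone_of_CC hv
  obtain ⟨i, hi⟩ := hF₀₁ (fun i => y₂ + v i) (fun _ _ h => by dsimp only; gcongr; exact hvm h)
    (y₂ + a)
    (hS'.O4 (fun _ => y₂) v monotone_const hvm y₂ a (by simp) hva) ha'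
  obtain ⟨c, hc, hc'⟩ := hS'.O5 hy₀₁ (hy₁N (hp₁'.le.trans hpg))
  obtain ⟨b, hb, hb'⟩ := hS'.O5 (hS'.CC_nsmul hq₁ N) ((nsmul_le_nsmul_right hqz N).trans hzF)
  have hF₀f : F₀ ≤ N • f := (hF₀₁.le.trans hF₁₂.le).trans hFf
  have habc : a ≤ (b + 2 • f) + c := by
    refine rm.le_of_add_le_add_right hS' (h := y₁) N (hy₁N ?_) ?_
    · calc p₁ ≤ f := hpf₁
        _ ≤ f + (b + f + c) := le_add_of_nonneg_right (h0 _)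
        _ = _ := by rw [two_nsmul]; abel
    · calc a + y₁ ≤ F₁ := by rwa [add_comm]
        _ ≤ F₀ + 2 • f := hF₁₂.le.trans hFF
        _ ≤ (N • q₁ + b) + 2 • f := by gcongr
        _ ≤ (N • g + b) + 2 • f := by gcongr; exact hq₁'.le.trans hqg
        _ ≤ ((y₁ + c) + b) + 2 • f := by gcongr
        _ = _ := by abel
  obtain ⟨s, t, hst, hsb, -, htc, hta⟩ :=
    hS.O6 habc ((hv i).trans_le (hva.1 ⟨_, rfl⟩))
  have hqy : N • q ≤ y₂ + t + 2 • f := by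
    refine rm.le_of_add_le_add_right hS' (h := s) (N + 2) ?_ ?_
    · calc s ≤ b + 2 • f := hsb
        _ ≤ N • f + 2 • f := by
          gcongr
          exact ((le_add_of_nonneg_left (h0 _)).trans hb).trans hF₀f
        _ = (N + 2) • f := (add_nsmul f N 2).symm
        _ ≤ _ := by
          gcongr
          rw [two_nsmul, ← add_assoc]
          exact le_add_of_nonneg_left (h0 _)
    · calc N • q + s ≤ N • q + (b + 2 • f) := by gcongr
        _ = (N • q + b) + 2 • f := by abel
        _ ≤ (y₂ + v i) + 2 • f := add_le_add_left (hb.trans hi) _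
        _ ≤ (y₂ + (s + t)) + 2 • f := by gcongr
        _ = _ := by abel
  have h4 : (4 * (n + 1)) • w = 4 • f := by rw [mul_nsmul', hw]
  have hbound : ∀ {x}, w ≤ x → y₀ + t ≤ N • x → y₀ + t + 4 • f ≤ (N + 4 * (n + 1)) • x := by
    intro x hx hyx
    rw [← h4, add_nsmul]
    gcongr
  obtain ⟨r, hr⟩ := rm.exists_succ_nsmul_eq (N + 4 * n + 3) (y₀ + t + 4 • f)
  have hN : N + 4 * n + 3 + 1 = N + 4 * (n + 1) := by ring
  refine ⟨r, rm.le_of_succ_nsmul_le (k := N + 4 * n + 3) ?_,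
    rm.le_of_succ_nsmul_le (k := N + 4 * n + 3) ?_, ?_, ?_⟩
  · rw [hr, hN]
    refine hbound hwf ?_
    calc y₀ + t ≤ y₁ + a := add_le_add hy₀₁.le hta
      _ ≤ N • f := ha.trans (hF₁₂.le.trans hFf)
  · rw [hr, hN]
    exact hbound hwg ((add_le_add le_rfl htc).trans hc)
  · rw [← hN, hr, add_assoc]
    exact hpy.trans (le_add_of_nonneg_right (h0 _))
  · rw [← hN, hr]
    calc N • q ≤ y₂ + t + 2 • f := hqy
      _ ≤ (y₀ + 2 • f) + t + 2 • f := by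
        gcongr
        exact hyy.trans (by gcongr)
      _ = y₀ + t + (2 + 2) • f := by rw [add_nsmul]; abel

theorem exists_upper_bound (rm : RealMul S) (hS : CuO6 S) {f g p p' q q' : S} {n : ℕ}
    (hfg : f ≤ (n + 1) • g) (hp : CC p p') (hq : CC q q') (hpf : p' ≤ f) (hpg : p' ≤ g)
    (hqf : q' ≤ f) (hqg : q' ≤ g) : ∃ r, r ≤ f ∧ r ≤ g ∧ p ≤ r ∧ q ≤ r := by
  obtain ⟨x, hpx, hxp⟩ := hS.CC_interpolate hp
  obtain ⟨y, hqy, hyq⟩ := hS.CC_interpolate hq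
  obtain ⟨u, hu, hux, hu'⟩ := rm.exists_ratio (4 * (n + 1)) x
  obtain ⟨v, hv, hvy, hv'⟩ := rm.exists_ratio (4 * (n + 1)) y
  obtain ⟨i, hi⟩ := hpx u hu x hux le_rfl
  obtain ⟨j, hj⟩ := hqy v hv y hvy le_rfl
  obtain ⟨r, hrf, hrg, hxr, hyr⟩ :=
    rm.exists_approx_upper_bound hS hfg hxp hyq hpf hpg hqf hqg (max i j + 1)
  rw [add_right_comm, ← hu'] at hxr
  rw [add_right_comm, ← hv'] at hyr
  exact ⟨r, hrf, hrg, (hi.trans (hu (le_max_left i j))).trans (rm.le_of_succ_nsmul_le hxr),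
    (hj.trans (hv (le_max_right i j))).trans (rm.le_of_succ_nsmul_le hyr)⟩

end RealMul

/-- the set `{h : ∃ h', h ≪ h' ≤ f, g}` is upward directed when `f ∝ g`. -/
theorem directed_lower_set {S : Type*} [AddCommMonoid S] [PartialOrder S]
    (hS : CuO6 S) (rm : RealMul S) (f g : S) (hfg : ∃ n : ℕ, f ≤ n • g) :
    ∀ p ∈ {h : S | ∃ h' : S, CC h h' ∧ h' ≤ f ∧ h' ≤ g},
      ∀ q ∈ {h : S | ∃ h' : S, CC h h' ∧ h' ≤ f ∧ h' ≤ g},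
        ∃ r ∈ {h : S | ∃ h' : S, CC h h' ∧ h' ≤ f ∧ h' ≤ g}, p ≤ r ∧ q ≤ r := by
  rintro p ⟨p', hp, hpf, hpg⟩ q ⟨q', hq, hqf, hqg⟩
  obtain ⟨n, hn⟩ := hfg
  have := hS.isOrderedAddMonoid_s12
  have hn' : f ≤ (n + 1) • g := hn.trans (nsmul_le_nsmul_left (hS.zeroLe g) n.le_succ)
  obtain ⟨x, hpx, hxp⟩ := hS.CC_interpolate hp
  obtain ⟨y, hqy, hyq⟩ := hS.CC_interpolate hq
  obtain ⟨s, hsf, hsg, hxs, hys⟩ := rm.exists_upper_bound hS hn' hxp hyq hpf hpg hqf hqg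
  obtain ⟨r, hr, hpr, hqr⟩ := hS.exists_CC_ge hpx hqy hxs hys
  exact ⟨r, ⟨s, hr, hsf, hsg⟩, hpr, hqr⟩
end
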